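/- arXiv:1702.02428 — 2 statements merged into one kernel-verified Lean document; each statement's English description precedes it below -/
import Mathlib

section
/- Let ε > 0 and define Q : ℝ → ℝ by Q(x) = e^{−|x|^{2+ε}/(2+ε)} ∫₀^x e^{|t|^{2+ε}/(2+ε)} dt. Then x^{1+ε/2}·Q(x) → 0 as x → +∞ and as x → −∞, and consequently Q is Lebesgue integrable on ℝ. -/
open Set Filter MeasureTheory

noncomputable section

/-- The Feller function `Q` for the operator `ψ'' − x|x|^ε ψ'`. -/
noncomputable def fellerQ (ε : ℝ) (x : ℝ) : ℝ :=
  Real.exp (-|x| ^ (2 + ε) / (2 + ε)) * ∫ t in (0:ℝ)..x, Real.exp (|t| ^ (2 + ε) / (2 + ε))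

/-!
The exponent `φ t = |t| ^ (2 + ε) / (2 + ε)` is convex, so on `[0, x]` it lies below its chord,
whose slope is `c = x ^ (1 + ε) / (2 + ε)`. Hence
`Q x = ∫₀ˣ exp (φ t - φ x) dt ≤ ∫₀ˣ exp (c (t - x)) dt ≤ c⁻¹`. As `Q` is odd, it is
`O(|x| ^ (-(1 + ε)))` at both ends of the line, and `1 + ε / 2 < 1 + ε`, `1 < 1 + ε` give the
decay and the integrability.
-/

open Asymptotics Real

lemma integral_exp_mul_sub_le_inv {c : ℝ} (hc : 0 < c) (a x : ℝ) :
    ∫ t in a..x, exp (c * (t - x)) ≤ c⁻¹ := by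
  have integral_eq : ∫ t in a..x, exp (c * (t - x)) = c⁻¹ * (1 - exp (c * (a - x))) := by
    simp [mul_sub, intervalIntegral.integral_comp_mul_sub _ hc.ne']
  rw [integral_eq]
  exact mul_le_of_le_one_right (inv_nonneg.2 hc.le) (sub_le_self 1 (exp_pos _).le)

lemma exp_neg_mul_integral_exp_le_of_convexOn {φ : ℝ → ℝ} {a x : ℝ} (hax : a < x)
    (hφ : ConvexOn ℝ (Icc a x) φ) (hφ_lt : φ a < φ x) :
    exp (-φ x) * ∫ t in a..x, exp (φ t) ≤ (x - a) / (φ x - φ a) := by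
  set c := (φ x - φ a) / (x - a) with hc
  have hc_pos : 0 < c := div_pos (sub_pos.2 hφ_lt) (sub_pos.2 hax)
  have le_chord {t : ℝ} (ht : t ∈ Ioo a x) : φ t - φ x ≤ c * (t - x) := by
    have slope_le : c ≤ (φ x - φ t) / (x - t) :=
      hφ.secant_mono_aux3 (left_mem_Icc.2 hax.le) (right_mem_Icc.2 hax.le) ht.1 ht.2
    rw [le_div_iff₀ (sub_pos.2 ht.2)] at slope_le
    linarith
  calc exp (-φ x) * ∫ t in a..x, exp (φ t)
      = ∫ t in a..x, exp (φ t - φ x) := by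
        rw [← intervalIntegral.integral_const_mul]
        simp only [← exp_add, neg_add_eq_sub]
    _ ≤ ∫ t in a..x, exp (c * (t - x)) := by
        simp only [intervalIntegral.integral_of_le hax.le, integral_Ioc_eq_integral_Ioo]
        refine integral_mono_of_nonneg (.of_forall fun _ ↦ (exp_pos _).le) ?_ ?_
        · exact (Continuous.integrableOn_Icc (by fun_prop)).mono_set Ioo_subset_Icc_self
        · exact (ae_restrict_mem measurableSet_Ioo).mono fun t ht ↦ exp_le_exp.2 (le_chord ht)
    _ ≤ c⁻¹ := integral_exp_mul_sub_le_inv hc_pos a x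
    _ = (x - a) / (φ x - φ a) := by rw [hc, inv_div]

lemma convexOn_norm_rpow {E : Type*} [SeminormedAddCommGroup E] [NormedSpace ℝ E] {s : Set E}
    (hs : Convex ℝ s) {p : ℝ} (hp : 1 ≤ p) : ConvexOn ℝ s fun v ↦ ‖v‖ ^ p := by
  refine ⟨hs, fun v hv w hw a b ha hb hab ↦ ?_⟩
  calc ‖a • v + b • w‖ ^ p ≤ (a • ‖v‖ + b • ‖w‖) ^ p :=
        rpow_le_rpow (norm_nonneg _) ((convexOn_norm hs).2 hv hw ha hb hab) (by linarith)
    _ ≤ a • ‖v‖ ^ p + b • ‖w‖ ^ p :=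
        (convexOn_rpow hp).2 (norm_nonneg v) (norm_nonneg w) ha hb hab

variable {ε : ℝ}

lemma fellerQ_odd (ε : ℝ) : (fellerQ ε).Odd := by
  intro x
  have integral_neg := intervalIntegral.integral_comp_neg (a := 0) (b := x)
    fun t ↦ exp (|t| ^ (2 + ε) / (2 + ε))
  simp only [abs_neg, neg_zero] at integral_neg
  rw [fellerQ, fellerQ, abs_neg, intervalIntegral.integral_symm, ← integral_neg, mul_neg]

lemma fellerQ_nonneg {x : ℝ} (hx : 0 ≤ x) : 0 ≤ fellerQ ε x :=
  mul_nonneg (exp_pos _).le (intervalIntegral.integral_nonneg hx fun _ _ ↦ (exp_pos _).le)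

lemma abs_fellerQ (ε x : ℝ) : |fellerQ ε x| = fellerQ ε |x| := by
  rcases le_total 0 x with hx | hx
  · rw [abs_of_nonneg hx, abs_of_nonneg (fellerQ_nonneg hx)]
  · rw [abs_of_nonpos hx, ← abs_neg, ← fellerQ_odd,
      abs_of_nonneg (fellerQ_nonneg (neg_nonneg.2 hx))]

lemma continuous_fellerQ (hε : -2 < ε) : Continuous (fellerQ ε) := by
  have continuous_abs_rpow : Continuous fun t : ℝ ↦ |t| ^ (2 + ε) :=
    continuous_abs.rpow_const fun _ ↦ Or.inr (by linarith)
  have continuous_integral :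
      Continuous fun x : ℝ ↦ ∫ t in (0 : ℝ)..x, exp (|t| ^ (2 + ε) / (2 + ε)) :=
    intervalIntegral.continuous_primitive
      (fun a b ↦ Continuous.intervalIntegrable (by fun_prop) a b) 0
  unfold fellerQ
  fun_prop

lemma fellerQ_le_rpow (hε : -1 ≤ ε) {x : ℝ} (hx : 0 < x) :
    fellerQ ε x ≤ (2 + ε) * x ^ (-(1 + ε)) := by
  have hp : 0 < 2 + ε := by linarith
  have convex_exponent : ConvexOn ℝ (Icc 0 x) fun t ↦ |t| ^ (2 + ε) / (2 + ε) := by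
    simpa only [smul_eq_mul, inv_mul_eq_div, norm_eq_abs] using
      (convexOn_norm_rpow (convex_Icc 0 x) (by linarith : 1 ≤ 2 + ε)).smul (inv_nonneg.2 hp.le)
  have chord_bound := exp_neg_mul_integral_exp_le_of_convexOn hx convex_exponent
    (by rw [abs_zero, zero_rpow hp.ne', zero_div]; positivity)
  calc fellerQ ε x ≤ x / (x ^ (2 + ε) / (2 + ε)) := by
        simpa [fellerQ, neg_div, zero_rpow hp.ne', abs_of_pos hx] using chord_bound
    _ = (2 + ε) * (x ^ (1 : ℝ) / x ^ (2 + ε)) := by rw [rpow_one]; field_simp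
    _ = (2 + ε) * x ^ (-(1 + ε)) := by rw [← rpow_sub hx]; congr 2; ring

lemma fellerQ_isBigO_cocompact (hε : -1 ≤ ε) :
    fellerQ ε =O[cocompact ℝ] fun x ↦ |x| ^ (-(1 + ε)) := by
  refine IsBigO.of_bound (2 + ε) ?_
  filter_upwards [tendsto_norm_cocompact_atTop.eventually_gt_atTop 0] with x hx
  rw [norm_eq_abs, abs_fellerQ, norm_of_nonneg (by positivity)]
  exact fellerQ_le_rpow hε hx

lemma tendsto_abs_rpow_mul_fellerQ_cocompact (hε : -1 ≤ ε) {α : ℝ} (hα : α < 1 + ε) :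
    Tendsto (fun x ↦ |x| ^ α * fellerQ ε x) (cocompact ℝ) (nhds 0) := by
  have rpow_tendsto : Tendsto (fun x : ℝ ↦ |x| ^ (-(1 + ε - α))) (cocompact ℝ) (nhds 0) :=
    (tendsto_rpow_neg_atTop (sub_pos.2 hα)).comp tendsto_norm_cocompact_atTop
  refine ((isBigO_refl _ _).mul (fellerQ_isBigO_cocompact hε)).trans_tendsto ?_
  refine rpow_tendsto.congr' ?_
  filter_upwards [tendsto_norm_cocompact_atTop.eventually_gt_atTop 0] with x hx
  rw [← norm_eq_abs, ← rpow_add hx]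
  congr 1
  ring

lemma integrable_fellerQ (hε : 0 < ε) : Integrable (fellerQ ε) := by
  have isBigO_atTop : fellerQ ε =O[atTop] fun x ↦ x ^ (-(1 + ε)) :=
    ((fellerQ_isBigO_cocompact (by linarith)).mono atTop_le_cocompact).congr' .rfl <| by
      filter_upwards [eventually_ge_atTop 0] with x hx
      rw [abs_of_nonneg hx]
  refine (continuous_fellerQ (by linarith)).locallyIntegrable
    |>.integrable_of_isBigO_atTop_of_norm_isNegInvariant ?_ isBigO_atTop ?_
  · exact .of_forall fun x ↦ by simp [fellerQ_odd ε x]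
  · exact ⟨Ioi 1, Ioi_mem_atTop 1, integrableOn_Ioi_rpow_of_lt (by linarith) one_pos⟩

/-- `|x|^{1+ε/2}·Q(x) → 0` as `x → ±∞`, and `Q` is Lebesgue integrable on `ℝ`. -/
theorem fellerQ_decay_and_integrable (ε : ℝ) (hε : 0 < ε) :
    Tendsto (fun x : ℝ => |x| ^ ((1:ℝ) + ε / 2) * fellerQ ε x) atTop (nhds 0) ∧
    Tendsto (fun x : ℝ => |x| ^ ((1:ℝ) + ε / 2) * fellerQ ε x) atBot (nhds 0) ∧
    Integrable (fellerQ ε) volume := by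
  have decay := tendsto_abs_rpow_mul_fellerQ_cocompact (ε := ε) (α := 1 + ε / 2)
    (by linarith) (by linarith)
  exact ⟨decay.mono_left atTop_le_cocompact, decay.mono_left atBot_le_cocompact,
    integrable_fellerQ hε⟩
end
end

section
/- Let ε > 0 and define R : ℝ → ℝ by R(x) = e^{|x|^{2+ε}/(2+ε)} ∫₀^x e^{−|t|^{2+ε}/(2+ε)} dt. Then R is not Lebesgue integrable on (0,+∞), and R is not Lebesgue integrable on (−∞,0). -/
open Set Filter MeasureTheory

noncomputable section

/-- The Feller function `R` for the operator `ψ'' − x|x|^ε ψ'`. -/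
noncomputable def fellerR (ε : ℝ) (x : ℝ) : ℝ :=
  Real.exp (|x| ^ (2 + ε) / (2 + ε)) * ∫ t in (0:ℝ)..x, Real.exp (-|t| ^ (2 + ε) / (2 + ε))

/-! If the Wronskian `W` is positive and nondecreasing away from the origin, then
`1 / W t ≥ 1 / W x` for `t` between `0` and `x`, so `R x = W x ∫₀ˣ 1 / W` satisfies `|R x| ≥ |x|`.
The negative half-line reduces to the positive one by the reflection `x ↦ -x`. -/

section FellerFunction

/-- The Feller function `x ↦ W x ∫₀ˣ 1 / W` of a one-dimensional second-order operator, expressed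
through its Wronskian `W`. The base point of the integral is fixed to be `0`. -/
def fellerFunction (W : ℝ → ℝ) (x : ℝ) : ℝ :=
  W x * ∫ t in (0 : ℝ)..x, (W t)⁻¹

variable {W : ℝ → ℝ}

theorem le_fellerFunction {x : ℝ} (hW : MonotoneOn W (Icc 0 x)) (hW₀ : 0 < W 0) (hx : 0 ≤ x) :
    x ≤ fellerFunction W x := by
  have W_pos : ∀ t ∈ Icc 0 x, 0 < W t := fun t ht ↦
    hW₀.trans_le (hW (left_mem_Icc.2 hx) ht ht.1)
  have inv_antitone : AntitoneOn (fun t ↦ (W t)⁻¹) (Icc 0 x) := fun s hs t ht hst ↦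
    inv_anti₀ (W_pos s hs) (hW hs ht hst)
  have inv_integrable : IntervalIntegrable (fun t ↦ (W t)⁻¹) volume 0 x := by
    rw [← uIcc_of_le hx] at inv_antitone
    exact inv_antitone.intervalIntegrable
  have hx_mem : x ∈ Icc 0 x := right_mem_Icc.2 hx
  have Wx_pos : 0 < W x := W_pos x hx_mem
  calc
    x = W x * ∫ _ in (0 : ℝ)..x, (W x)⁻¹ := by
      rw [intervalIntegral.integral_const, sub_zero, smul_eq_mul, mul_left_comm,
        mul_inv_cancel₀ Wx_pos.ne', mul_one]
    _ ≤ fellerFunction W x :=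
      mul_le_mul_of_nonneg_left
        (intervalIntegral.integral_mono_on hx intervalIntegrable_const inv_integrable
          fun _ ht ↦ inv_antitone ht hx_mem ht.2)
        Wx_pos.le

theorem fellerFunction_comp_neg (W : ℝ → ℝ) (x : ℝ) :
    fellerFunction (fun t ↦ W (-t)) x = -fellerFunction W (-x) := by
  simp only [fellerFunction]
  rw [intervalIntegral.integral_comp_neg fun t ↦ (W t)⁻¹, neg_zero,
    intervalIntegral.integral_symm, mul_neg]

theorem not_integrableOn_Ioi_of_id_le {f : ℝ → ℝ} (hf : ∀ x > 0, x ≤ f x) :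
    ¬ IntegrableOn f (Ioi 0) := fun hint ↦ by
  have id_integrable : IntegrableOn (fun x : ℝ ↦ x) (Ioi 0) := by
    refine Integrable.mono' hint aestronglyMeasurable_id
      (ae_restrict_of_forall_mem measurableSet_Ioi fun x (hx : 0 < x) ↦ ?_)
    rw [Real.norm_of_nonneg hx.le]
    exact hf x hx
  exact not_integrableOn_Ioi_rpow 1 (by simpa only [Real.rpow_one] using id_integrable)

theorem not_integrableOn_Ioi_fellerFunction (hW : MonotoneOn W (Ici 0)) (hW₀ : 0 < W 0) :
    ¬ IntegrableOn (fellerFunction W) (Ioi 0) :=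
  not_integrableOn_Ioi_of_id_le fun _ hx ↦
    le_fellerFunction (hW.mono Icc_subset_Ici_self) hW₀ hx.le

theorem not_integrableOn_Iio_fellerFunction (hW : AntitoneOn W (Iic 0)) (hW₀ : 0 < W 0) :
    ¬ IntegrableOn (fellerFunction W) (Iio 0) := fun hint ↦ by
  have reflected_monotone : MonotoneOn (fun t ↦ W (-t)) (Ici 0) := fun _ hs _ ht hst ↦
    hW (mem_Iic.2 (neg_nonpos.2 ht)) (mem_Iic.2 (neg_nonpos.2 hs)) (neg_le_neg hst)
  have reflected_integrable : IntegrableOn (fellerFunction fun t ↦ W (-t)) (Ioi 0) := by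
    rw [← neg_zero] at hint
    rw [funext (fellerFunction_comp_neg W)]
    exact hint.comp_neg_Ioi.neg
  exact not_integrableOn_Ioi_fellerFunction reflected_monotone (by rwa [neg_zero])
    reflected_integrable

end FellerFunction

section PowerDrift

/-- The Wronskian `W(x) = exp(|x|^{2+ε} / (2+ε))` of the operator `ψ'' − x|x|^ε ψ'`. -/
def powerWronskian (ε x : ℝ) : ℝ :=
  Real.exp (|x| ^ (2 + ε) / (2 + ε))

theorem fellerR_eq_fellerFunction (ε : ℝ) : fellerR ε = fellerFunction (powerWronskian ε) := by
  funext x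
  simp only [fellerR, fellerFunction, powerWronskian, neg_div, Real.exp_neg]

theorem powerWronskian_pos (ε x : ℝ) : 0 < powerWronskian ε x :=
  Real.exp_pos _

variable {ε : ℝ}

theorem powerWronskian_le_of_abs_le (hε : -2 < ε) {x y : ℝ} (hxy : |x| ≤ |y|) :
    powerWronskian ε x ≤ powerWronskian ε y := by
  have exponent_pos : 0 < 2 + ε := by linarith
  unfold powerWronskian
  gcongr

theorem monotoneOn_powerWronskian (hε : -2 < ε) : MonotoneOn (powerWronskian ε) (Ici 0) :=
  fun _ hx _ _ hxy ↦ powerWronskian_le_of_abs_le hε (abs_le_abs_of_nonneg hx hxy)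

theorem antitoneOn_powerWronskian (hε : -2 < ε) : AntitoneOn (powerWronskian ε) (Iic 0) :=
  fun _ _ _ hy hxy ↦ powerWronskian_le_of_abs_le hε (abs_le_abs_of_nonpos hy hxy)

theorem fellerR_not_integrable_general (hε : -2 < ε) :
    ¬ IntegrableOn (fellerR ε) (Ioi 0) ∧ ¬ IntegrableOn (fellerR ε) (Iio 0) := by
  rw [fellerR_eq_fellerFunction]
  exact ⟨not_integrableOn_Ioi_fellerFunction (monotoneOn_powerWronskian hε)
      (powerWronskian_pos ε 0),
    not_integrableOn_Iio_fellerFunction (antitoneOn_powerWronskian hε) (powerWronskian_pos ε 0)⟩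

end PowerDrift

/-- `R` is not Lebesgue integrable on `(0,+∞)` nor on `(−∞,0)`. -/
theorem fellerR_not_integrable (ε : ℝ) (hε : 0 < ε) :
    ¬ IntegrableOn (fellerR ε) (Ioi (0:ℝ)) volume ∧
    ¬ IntegrableOn (fellerR ε) (Iio (0:ℝ)) volume :=
  fellerR_not_integrable_general (by linarith)
end
end
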